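/- Let f : (a,b) → ℝ be C² with f′(x) < 0 for all x ∈ (a,b) and b < f(a). Suppose x* ∈ (a,b) is a fixed point of f with f′(x*) = λ ≠ −1 and f∘f has no fixed points other than x*. Let g : (c,d) → ℝ be C² with g′(y) < 0 for all y ∈ (c,d) and d < g(c). Suppose y* ∈ (c,d) is a fixed point of g with g′(y*) = λ and g∘g has no fixed points other than y*. Then there exists an increasing C¹ diffeomorphism h : (f⁻¹(b), b) → (g⁻¹(d), d) such that h(f(x)) = g(h(x)) for all x ∈ (f⁻¹(b), b) with f(x) ∈ (f⁻¹(b), b). -/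

import Mathlib

/-- `h` is a `C¹` diffeomorphism from `U` onto `V`. -/
def IsDiffeoOn (h : ℝ → ℝ) (U V : Set ℝ) : Prop :=
  Set.BijOn h U V ∧ ContDiffOn ℝ 1 h U ∧
    ∃ hinv : ℝ → ℝ, Set.InvOn hinv h U V ∧ ContDiffOn ℝ 1 hinv V

/-- `h` intertwines `f` and `g` on `U`: `h (f x) = g (h x)` for all `x ∈ U` with `f x ∈ U`. -/
def ConjRelOn (h f g : ℝ → ℝ) (U : Set ℝ) : Prop :=
  ∀ x ∈ U, f x ∈ U → h (f x) = g (h x)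

/-!
A decreasing branch `f` of `[u, v]` with `f u = v`, multiplier `λ ≠ -1` at its fixed point `p` and
no other `2`-periodic point is `C¹`-conjugate to `x ↦ λ x`. The uniqueness of `p` as a fixed point
of `f ∘ f` forces either `λ > -1` and `f` maps `[u, v]` into itself, with `f ∘ f` a contraction
towards `p`, or `λ < -1` and the same holds for `f⁻¹`. In the first case
`∑ log (f' (fⁿ x) / λ)` converges to a continuous `S`, the density `ψ = exp S` satisfies
`(ψ ∘ f) f' = λ ψ`, and hence `φ x = ∫ t in p..x, ψ t` satisfies `φ ∘ f = λ φ`. Finally, if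
`φ` and `χ` linearize `f` and `g`, choose `k > 0` so that `k φ` and `χ` agree at the left endpoints;
the functional equation makes them agree at the right endpoints, and `χ⁻¹ ∘ (k φ)` is the conjugacy.
-/

open Set Filter Topology

section Calculus

lemma continuousOn_dslope_of_differentiableAt {𝕜 E : Type*} [NontriviallyNormedField 𝕜]
    [NormedAddCommGroup E] [NormedSpace 𝕜 E] {f : 𝕜 → E} {s : Set 𝕜} {p : 𝕜}
    (hf : ContinuousOn f s) (hp : DifferentiableAt 𝕜 f p) : ContinuousOn (dslope f p) s := by
  intro x hx
  obtain rfl | hne := eq_or_ne x p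
  · exact (continuousAt_dslope_same.2 hp).continuousWithinAt
  · exact (continuousWithinAt_dslope_of_ne hne).2 (hf x hx)

lemma exists_norm_sub_le_mul_of_isCompact {𝕜 E : Type*} [NontriviallyNormedField 𝕜]
    [NormedAddCommGroup E] [NormedSpace 𝕜 E] {f : 𝕜 → E} {K : Set 𝕜} {p : 𝕜}
    (hK : IsCompact K) (hf : ContinuousOn f K) (hp : DifferentiableAt 𝕜 f p) :
    ∃ C ≥ 0, ∀ x ∈ K, ‖f x - f p‖ ≤ C * ‖x - p‖ := by
  obtain ⟨C, hC⟩ := hK.exists_bound_of_continuousOn (continuousOn_dslope_of_differentiableAt hf hp)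
  refine ⟨|C|, abs_nonneg C, fun x hx ↦ ?_⟩
  rw [← sub_smul_dslope, norm_smul, mul_comm]
  gcongr
  exact (hC x hx).trans (le_abs_self C)

lemma contDiffAt_of_eventually_leftInverse {𝕜 : Type*} [RCLike 𝕜] {n : WithTop ℕ∞} {f g : 𝕜 → 𝕜}
    {x : 𝕜} (hf : ContDiffAt 𝕜 n f x) (hn : n ≠ 0) (hf' : deriv f x ≠ 0)
    (hg : ∀ᶠ y in 𝓝 x, g (f y) = y) : ContDiffAt 𝕜 n g (f x) := by
  have hd := (hf.hasStrictDerivAt hn).hasStrictFDerivAt_equiv hf'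
  exact (hf.to_localInverse hd.hasFDerivAt hn).congr_of_eventuallyEq (hd.localInverse_unique hg)

lemma contDiffOn_one_of_hasDerivAt {𝕜 E : Type*} [NontriviallyNormedField 𝕜]
    [NormedAddCommGroup E] [NormedSpace 𝕜 E] {f f' : 𝕜 → E} {s : Set 𝕜} (hs : IsOpen s)
    (hf : ∀ x ∈ s, HasDerivAt f (f' x) x) (hf' : ContinuousOn f' s) : ContDiffOn 𝕜 1 f s := by
  rw [contDiffOn_one_iff_derivWithin hs.uniqueDiffOn]
  refine ⟨fun x hx ↦ (hf x hx).differentiableAt.differentiableWithinAt, hf'.congr fun x hx ↦ ?_⟩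
  rw [derivWithin_of_isOpen hs hx, (hf x hx).deriv]

lemma continuousOn_invFunOn_of_isCompact {X Y : Type*} [TopologicalSpace X] [Nonempty X]
    [TopologicalSpace Y] [T2Space Y] {f : X → Y} {K : Set X} (hK : IsCompact K)
    (hf : ContinuousOn f K) (hinj : InjOn f K) :
    ContinuousOn (Function.invFunOn f K) (f '' K) := by
  have hleft : LeftInvOn (Function.invFunOn f K) f K := hinj.leftInvOn_invFunOn
  refine continuousOn_iff_isClosed.2 fun t ht ↦ ⟨f '' (t ∩ K), ?_, ?_⟩
  · exact ((hK.inter_left ht).image_of_continuousOn (hf.mono inter_subset_right)).isClosed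
  · rw [hleft.image_inter', inter_assoc, inter_self]

lemma hasDerivAt_integral_of_continuousOn_Ioo {E : Type*} [NormedAddCommGroup E] [NormedSpace ℝ E]
    [CompleteSpace E] {ψ : ℝ → E} {u v p x : ℝ} (hψ : ContinuousOn ψ (Ioo u v))
    (hp : p ∈ Ioo u v) (hx : x ∈ Ioo u v) : HasDerivAt (fun y ↦ ∫ t in p..y, ψ t) (ψ x) x :=
  intervalIntegral.integral_hasDerivAt_right
    (hψ.mono (ordConnected_Ioo.uIcc_subset hp hx)).intervalIntegrable
    (hψ.stronglyMeasurableAtFilter isOpen_Ioo x hx) (hψ.continuousAt (isOpen_Ioo.mem_nhds hx))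

lemma integral_comp_eq_mul_integral {f f' ψ : ℝ → ℝ} {u v p m : ℝ} (hp : p ∈ Ioo u v)
    (hfix : f p = p) (hmaps : MapsTo f (Ioo u v) (Ioo u v))
    (hf : ∀ x ∈ Ioo u v, HasDerivAt f (f' x) x) (hf' : ContinuousOn f' (Ioo u v))
    (hψ : ContinuousOn ψ (Ioo u v)) (heq : ∀ x ∈ Ioo u v, ψ (f x) * f' x = m * ψ x) :
    ∀ x ∈ Ioo u v, ∫ t in p..f x, ψ t = m * ∫ t in p..x, ψ t := by
  intro x hx
  have hsub : uIcc p x ⊆ Ioo u v := ordConnected_Ioo.uIcc_subset hp hx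
  calc ∫ t in p..f x, ψ t = ∫ t in f p..f x, ψ t := by rw [hfix]
    _ = ∫ t in p..x, (ψ ∘ f) t * f' t :=
        (intervalIntegral.integral_comp_mul_deriv' (fun t ht ↦ hf t (hsub ht)) (hf'.mono hsub)
          (hψ.mono (hmaps.mono_left hsub).image_subset)).symm
    _ = ∫ t in p..x, m * ψ t :=
        intervalIntegral.integral_congr fun t ht ↦ heq t (hsub ht)
    _ = m * ∫ t in p..x, ψ t := intervalIntegral.integral_const_mul m ψ

end Calculus

section OrbitSum

/-- The sum `∑ G (F^n x)` of `G` along the forward orbit of `x`: where it converges, it solves the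
cohomological equation `S = G + S ∘ F`. -/
noncomputable def orbitSum {X E : Type*} [AddCommMonoid E] [TopologicalSpace E] (F : X → X)
    (G : X → E) (x : X) : E :=
  ∑' n : ℕ, G (F^[n] x)

variable {X E : Type*} [NormedAddCommGroup E] {F : X → X} {G : X → E}

lemma orbitSum_eq_add_orbitSum {x : X} (hx : Summable fun n ↦ G (F^[n] x)) :
    orbitSum F G x = G x + orbitSum F G (F x) :=
  hx.tsum_eq_zero_add

variable [CompleteSpace E] {K U : Set X} {r : ℕ → ℝ} {k : ℕ}

lemma summable_comp_iterate (hr : Summable r) (hG : ∀ n, ∀ x ∈ K, ‖G (F^[n] x)‖ ≤ r n)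
    (hUK : MapsTo F^[k] U K) {x : X} (hx : x ∈ U) : Summable fun n ↦ G (F^[n] x) := by
  refine (summable_nat_add_iff k).1 (Summable.of_norm_bounded hr fun n ↦ ?_)
  rw [Function.iterate_add_apply]
  exact hG n _ (hUK hx)

lemma continuousOn_orbitSum [TopologicalSpace X] (hr : Summable r)
    (hG : ∀ n, ∀ x ∈ K, ‖G (F^[n] x)‖ ≤ r n) (hKU : K ⊆ U) (hUK : MapsTo F^[k] U K)
    (hU : MapsTo F U U) (hFc : ContinuousOn F U) (hGc : ContinuousOn G U) :
    ContinuousOn (orbitSum F G) U := by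
  have hterm (n : ℕ) : ContinuousOn (fun x ↦ G (F^[n] x)) U :=
    hGc.comp (hFc.iterate hU n) (hU.iterate n)
  have hK : ContinuousOn (orbitSum F G) K :=
    continuousOn_tsum (fun n ↦ (hterm n).mono hKU) hr hG
  have hshift : EqOn (orbitSum F G)
      (fun x ↦ ∑ n ∈ Finset.range k, G (F^[n] x) + orbitSum F G (F^[k] x)) U := fun x hx ↦ by
    simp only [orbitSum, ← Function.iterate_add_apply]
    exact ((summable_comp_iterate hr hG hUK hx).sum_add_tsum_nat_add k).symm
  refine ContinuousOn.congr ?_ hshift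
  exact (continuousOn_finsetSum _ fun n _ ↦ hterm n).add (hK.comp (hFc.iterate hU k) hUK)

end OrbitSum

section Contraction

lemma dist_iterate_le_of_dist_comp_self_le {X : Type*} [PseudoMetricSpace X] {F : X → X}
    {s : Set X} {p : X} {θ C : ℝ} (hF : MapsTo F s s) (hθ : 0 ≤ θ)
    (hcontr : ∀ x ∈ s, dist (F (F x)) p ≤ θ * dist x p) (hC : ∀ x ∈ s, dist x p ≤ C) (n : ℕ) :
    ∀ x ∈ s, dist (F^[n] x) p ≤ C * θ ^ (n / 2) := by
  intro x hx
  induction n using Nat.twoStepInduction with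
  | zero => simpa using hC x hx
  | one => simpa using hC (F x) (hF hx)
  | more n ih _ =>
    rw [Function.iterate_succ_apply', Function.iterate_succ_apply', Nat.add_div_right n two_pos]
    calc dist (F (F (F^[n] x))) p ≤ θ * dist (F^[n] x) p := hcontr _ (hF.iterate n hx)
      _ ≤ θ * (C * θ ^ (n / 2)) := by gcongr
      _ = C * θ ^ (n / 2 + 1) := by ring

lemma summable_pow_div_two {θ : ℝ} (h0 : 0 ≤ θ) (h1 : θ < 1) :
    Summable fun n : ℕ ↦ θ ^ (n / 2) := by
  have hgeom := summable_geometric_of_lt_one h0 h1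
  refine Summable.even_add_odd ?_ ?_
  · simpa using hgeom
  · simpa [Nat.mul_add_div] using hgeom

variable {H : ℝ → ℝ} {s : Set ℝ} {p x : ℝ}

lemma dslope_lt_one_iff_of_unique_fixedPoint (hs : IsPreconnected s) (hH : ContinuousOn H s)
    (hd : DifferentiableAt ℝ H p) (hd1 : deriv H p ≠ 1) (hfix : H p = p)
    (huniq : ∀ y ∈ s, H y = y → y = p) (hp : p ∈ s) (hx : x ∈ s) :
    dslope H p x < 1 ↔ deriv H p < 1 := by
  have hcont := continuousOn_dslope_of_differentiableAt hH hd
  have hne : ∀ y ∈ s, dslope H p y ≠ 1 := by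
    intro y hy h1
    have hslope := sub_smul_dslope H p y
    rw [h1, hfix, smul_eq_mul, mul_one] at hslope
    obtain rfl := huniq y hy (by linarith)
    exact hd1 (dslope_same H y ▸ h1)
  rw [← dslope_same H p]
  constructor <;> intro hlt <;> by_contra! hge
  · obtain ⟨y, hy, hy1⟩ := hs.intermediate_value hx hp hcont ⟨hlt.le, hge⟩
    exact hne y hy hy1
  · obtain ⟨y, hy, hy1⟩ := hs.intermediate_value hp hx hcont ⟨hlt.le, hge⟩
    exact hne y hy hy1

lemma exists_dist_le_mul_dist_of_unique_fixedPoint (hs : IsPreconnected s) (hcomp : IsCompact s)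
    (hH : ContinuousOn H s) (hmono : MonotoneOn H s) (hd : DifferentiableAt ℝ H p)
    (hd0 : 0 ≤ deriv H p) (hd1 : deriv H p < 1) (hfix : H p = p)
    (huniq : ∀ y ∈ s, H y = y → y = p) (hp : p ∈ s) :
    ∃ θ, 0 ≤ θ ∧ θ < 1 ∧ ∀ x ∈ s, dist (H x) p ≤ θ * dist x p := by
  have hnonneg : ∀ x ∈ s, 0 ≤ dslope H p x := by
    intro x hx
    obtain rfl | hne := eq_or_ne x p
    · rwa [dslope_same]
    · rw [dslope_of_ne H hne]
      exact hmono.slope_nonneg hp hx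
  obtain ⟨z, hz, hmax⟩ :=
    hcomp.exists_isMaxOn ⟨p, hp⟩ (continuousOn_dslope_of_differentiableAt hH hd)
  refine ⟨dslope H p z, hnonneg z hz, ?_, fun x hx ↦ ?_⟩
  · exact (dslope_lt_one_iff_of_unique_fixedPoint hs hH hd hd1.ne hfix huniq hp hz).2 hd1
  · calc dist (H x) p = |(x - p) • dslope H p x| := by
          rw [sub_smul_dslope, hfix, Real.dist_eq]
      _ = dslope H p x * dist x p := by
          rw [smul_eq_mul, abs_mul, abs_of_nonneg (hnonneg x hx), mul_comm, Real.dist_eq]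
      _ ≤ dslope H p z * dist x p := by
          gcongr
          exact hmax hx

end Contraction

section Diffeo

lemma IsDiffeoOn.trans {h k : ℝ → ℝ} {U V W : Set ℝ} (hh : IsDiffeoOn h U V)
    (hk : IsDiffeoOn k V W) : IsDiffeoOn (k ∘ h) U W := by
  obtain ⟨hbij, hsmooth, hinv, hInv, hinv_smooth⟩ := hh
  obtain ⟨kbij, ksmooth, kinv, kInv, kinv_smooth⟩ := hk
  have hmaps : MapsTo kinv W V := kInv.1.mapsTo kbij.surjOn
  exact ⟨kbij.comp hbij, ksmooth.comp hsmooth hbij.mapsTo, hinv ∘ kinv,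
    hInv.comp kInv hbij.mapsTo hmaps, hinv_smooth.comp kinv_smooth hmaps⟩

lemma IsDiffeoOn.exists_inverse {h : ℝ → ℝ} {U V : Set ℝ} (hh : IsDiffeoOn h U V) :
    ∃ k, InvOn k h U V ∧ IsDiffeoOn k V U := by
  obtain ⟨hbij, hsmooth, k, hInv, ksmooth⟩ := hh
  exact ⟨k, hInv, hbij.symm hInv.symm, ksmooth, h, hInv.symm, hsmooth⟩

lemma isDiffeoOn_of_deriv_ne_zero {φ : ℝ → ℝ} {U V : Set ℝ} (hU : IsOpen U)
    (hφ : ContDiffOn ℝ 1 φ U) (hφ' : ∀ x ∈ U, deriv φ x ≠ 0) (hbij : BijOn φ U V) :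
    IsDiffeoOn φ U V := by
  refine ⟨hbij, hφ, Function.invFunOn φ U, hbij.invOn_invFunOn, fun y hy ↦ ?_⟩
  obtain ⟨x, hx, rfl⟩ := hbij.surjOn hy
  have hleft : ∀ᶠ z in 𝓝 x, Function.invFunOn φ U (φ z) = z := by
    filter_upwards [hU.mem_nhds hx] with z hz using hbij.invOn_invFunOn.1 hz
  exact (contDiffAt_of_eventually_leftInverse (hφ.contDiffAt (hU.mem_nhds hx)) one_ne_zero
    (hφ' x hx) hleft).contDiffWithinAt

end Diffeo

section Linearization

/-- `φ` is an increasing `C¹` coordinate on `(u, v)`, continuous on `[u, v]`, that turns `f` into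
multiplication by `m`. The functional equation is stated as an equivalence so that it also
characterizes the graph of `f` inside `[u, v] × [u, v]`, and is thus symmetric under passing from
`f` to its inverse. -/
structure IsLinearization (φ f : ℝ → ℝ) (u v m : ℝ) : Prop where
  continuousOn : ContinuousOn φ (Icc u v)
  contDiffOn : ContDiffOn ℝ 1 φ (Ioo u v)
  deriv_pos : ∀ x ∈ Ioo u v, 0 < deriv φ x
  apply_eq_iff : ∀ x ∈ Icc u v, ∀ y ∈ Icc u v, f x = y ↔ φ y = m * φ x

namespace IsLinearization

variable {φ χ f g F : ℝ → ℝ} {u v c d m : ℝ}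

lemma strictMonoOn (hφ : IsLinearization φ f u v m) : StrictMonoOn φ (Icc u v) :=
  strictMonoOn_of_deriv_pos (convex_Icc u v) hφ.continuousOn
    (by simpa only [interior_Icc] using hφ.deriv_pos)

lemma of_mapsTo (hmaps : MapsTo f (Icc u v) (Icc u v)) (hcont : ContinuousOn φ (Icc u v))
    (hsmooth : ContDiffOn ℝ 1 φ (Ioo u v)) (hpos : ∀ x ∈ Ioo u v, 0 < deriv φ x)
    (heq : ∀ x ∈ Icc u v, φ (f x) = m * φ x) : IsLinearization φ f u v m where
  continuousOn := hcont
  contDiffOn := hsmooth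
  deriv_pos := hpos
  apply_eq_iff x hx y hy := by
    have hmono : StrictMonoOn φ (Icc u v) :=
      strictMonoOn_of_deriv_pos (convex_Icc u v) hcont (by rwa [interior_Icc])
    rw [← heq x hx, hmono.injOn.eq_iff hy (hmaps hx), eq_comm]

lemma isDiffeoOn (hφ : IsLinearization φ f u v m) (huv : u < v) :
    IsDiffeoOn φ (Ioo u v) (Ioo (φ u) (φ v)) := by
  have hmono := hφ.strictMonoOn
  refine isDiffeoOn_of_deriv_ne_zero isOpen_Ioo hφ.contDiffOn
    (fun x hx ↦ (hφ.deriv_pos x hx).ne') ⟨fun x hx ↦ ?_, ?_, ?_⟩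
  · exact ⟨hmono (left_mem_Icc.2 huv.le) (Ioo_subset_Icc_self hx) hx.1,
      hmono (Ioo_subset_Icc_self hx) (right_mem_Icc.2 huv.le) hx.2⟩
  · exact hmono.injOn.mono Ioo_subset_Icc_self
  · exact intermediate_value_Ioo huv.le hφ.continuousOn

lemma const_mul (hφ : IsLinearization φ f u v m) {k : ℝ} (hk : 0 < k) :
    IsLinearization (fun x ↦ k * φ x) f u v m where
  continuousOn := hφ.continuousOn.const_mul k
  contDiffOn := contDiffOn_const.mul hφ.contDiffOn
  deriv_pos x hx := by
    rw [deriv_const_mul_field]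
    exact mul_pos hk (hφ.deriv_pos x hx)
  apply_eq_iff x hx y hy := by
    rw [hφ.apply_eq_iff x hx y hy, mul_left_comm, mul_right_inj' hk.ne']

lemma of_inverse (hφ : IsLinearization φ F u v m⁻¹) (hm : m ≠ 0)
    (hF : ∀ x ∈ Icc u v, ∀ y ∈ Icc u v, f x = y ↔ F y = x) : IsLinearization φ f u v m where
  continuousOn := hφ.continuousOn
  contDiffOn := hφ.contDiffOn
  deriv_pos := hφ.deriv_pos
  apply_eq_iff x hx y hy := by
    rw [hF x hx y hy, hφ.apply_eq_iff y hy x hx, eq_inv_mul_iff_mul_eq₀ hm, eq_comm]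

lemma apply_right (hφ : IsLinearization φ f u v m) (huv : u ≤ v) (hfu : f u = v) :
    φ v = m * φ u :=
  (hφ.apply_eq_iff u (left_mem_Icc.2 huv) v (right_mem_Icc.2 huv)).1 hfu

lemma apply_left_neg (hφ : IsLinearization φ f u v m) (huv : u < v) (hfu : f u = v) (hm : m < 1) :
    φ u < 0 := by
  have hlt : φ u < φ v :=
    hφ.strictMonoOn (left_mem_Icc.2 huv.le) (right_mem_Icc.2 huv.le) huv
  rw [hφ.apply_right huv.le hfu] at hlt
  nlinarith

lemma exists_conjugacy_of_eq (hφ : IsLinearization φ f u v m) (hχ : IsLinearization χ g c d m)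
    (huv : u < v) (hcd : c < d) (hleft : φ u = χ c) (hright : φ v = χ d) :
    ∃ h, StrictMonoOn h (Ioo u v) ∧ IsDiffeoOn h (Ioo u v) (Ioo c d) ∧
      ConjRelOn h f g (Ioo u v) := by
  have hφdiff := hφ.isDiffeoOn huv
  rw [hleft, hright] at hφdiff
  obtain ⟨χinv, hInv, hχinv⟩ := (hχ.isDiffeoOn hcd).exists_inverse
  have hh : IsDiffeoOn (χinv ∘ φ) (Ioo u v) (Ioo c d) := hφdiff.trans hχinv
  have hmem : ∀ x ∈ Ioo u v, (χinv ∘ φ) x ∈ Icc c d := fun x hx ↦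
    Ioo_subset_Icc_self (hh.1.mapsTo hx)
  have hχh : ∀ x ∈ Ioo u v, χ ((χinv ∘ φ) x) = φ x := fun x hx ↦
    hInv.2 (hφdiff.1.mapsTo hx)
  refine ⟨χinv ∘ φ, fun x hx y hy hxy ↦ ?_, hh, fun x hx hfx ↦ ?_⟩
  · rw [← hχ.strictMonoOn.lt_iff_lt (hmem x hx) (hmem y hy), hχh x hx, hχh y hy]
    exact hφ.strictMonoOn (Ioo_subset_Icc_self hx) (Ioo_subset_Icc_self hy) hxy
  · refine ((hχ.apply_eq_iff _ (hmem x hx) _ (hmem _ hfx)).2 ?_).symm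
    rw [hχh x hx, hχh _ hfx]
    exact (hφ.apply_eq_iff x (Ioo_subset_Icc_self hx) _ (Ioo_subset_Icc_self hfx)).1 rfl

lemma exists_conjugacy (hφ : IsLinearization φ f u v m) (hχ : IsLinearization χ g c d m)
    (huv : u < v) (hcd : c < d) (hfu : f u = v) (hgc : g c = d) (hm : m < 1) :
    ∃ h, StrictMonoOn h (Ioo u v) ∧ IsDiffeoOn h (Ioo u v) (Ioo c d) ∧
      ConjRelOn h f g (Ioo u v) := by
  have hφu := hφ.apply_left_neg huv hfu hm
  have hχc := hχ.apply_left_neg hcd hgc hm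
  have hscale : χ c / φ u * φ u = χ c := div_mul_cancel₀ _ hφu.ne
  refine (hφ.const_mul (div_pos_of_neg_of_neg hχc hφu)).exists_conjugacy_of_eq hχ huv hcd hscale ?_
  simp only [hφ.apply_right huv.le hfu, hχ.apply_right hcd.le hgc]
  rw [mul_left_comm, hscale]

end IsLinearization

end Linearization


section DecreasingBranch

/-- A decreasing `C¹` branch `f` on `[u, v]` with a fixed point `p` at which `f` is twice
differentiable, and with no other periodic orbit of period at most `2` staying in `[u, v]`. The
values `f x` may leave `[u, v]`. -/
structure IsDecreasingBranch (f : ℝ → ℝ) (u v p : ℝ) : Prop where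
  mem_Ioo : p ∈ Ioo u v
  apply_fixed : f p = p
  continuousOn : ContinuousOn f (Icc u v)
  contDiffOn : ContDiffOn ℝ 1 f (Ioo u v)
  deriv_neg : ∀ x ∈ Ioo u v, deriv f x < 0
  differentiableAt_deriv : DifferentiableAt ℝ (deriv f) p
  eq_of_two_periodic : ∀ x ∈ Icc u v, f x ∈ Icc u v → f (f x) = x → x = p

namespace IsDecreasingBranch

variable {f : ℝ → ℝ} {u v p : ℝ}

lemma lt (hf : IsDecreasingBranch f u v p) : u < v :=
  hf.mem_Ioo.1.trans hf.mem_Ioo.2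

lemma left_mem (hf : IsDecreasingBranch f u v p) : u ∈ Icc u v :=
  left_mem_Icc.2 hf.lt.le

lemma right_mem (hf : IsDecreasingBranch f u v p) : v ∈ Icc u v :=
  right_mem_Icc.2 hf.lt.le

lemma mem_Icc (hf : IsDecreasingBranch f u v p) : p ∈ Icc u v :=
  Ioo_subset_Icc_self hf.mem_Ioo

lemma strictAntiOn (hf : IsDecreasingBranch f u v p) : StrictAntiOn f (Icc u v) :=
  strictAntiOn_of_deriv_neg (convex_Icc u v) hf.continuousOn
    (by simpa only [interior_Icc] using hf.deriv_neg)

lemma contDiffAt (hf : IsDecreasingBranch f u v p) {x : ℝ} (hx : x ∈ Ioo u v) :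
    ContDiffAt ℝ 1 f x :=
  hf.contDiffOn.contDiffAt (isOpen_Ioo.mem_nhds hx)

lemma hasDerivAt (hf : IsDecreasingBranch f u v p) {x : ℝ} (hx : x ∈ Ioo u v) :
    HasDerivAt f (deriv f x) x :=
  ((hf.contDiffAt hx).differentiableAt one_ne_zero).hasDerivAt

lemma continuousOn_deriv (hf : IsDecreasingBranch f u v p) : ContinuousOn (deriv f) (Ioo u v) :=
  hf.contDiffOn.continuousOn_deriv_of_isOpen isOpen_Ioo le_rfl

lemma hasDerivAt_comp_self (hf : IsDecreasingBranch f u v p) :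
    HasDerivAt (fun x ↦ f (f x)) (deriv f p ^ 2) p := by
  have hp := hf.hasDerivAt hf.mem_Ioo
  rw [sq]
  exact HasDerivAt.comp p (hf.apply_fixed.symm ▸ hp) hp

lemma deriv_sq_lt_one_iff (hf : IsDecreasingBranch f u v p) :
    deriv f p ^ 2 < 1 ↔ -1 < deriv f p := by
  have hneg := hf.deriv_neg p hf.mem_Ioo
  rw [sq_lt_one_iff_abs_lt_one, abs_of_neg hneg, neg_lt]

-- `f ∘ f` maps `u` to `f v`, so the sign of `f v - u` says whether `f ∘ f` moves `u` towards `p`;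
-- since `f ∘ f` has no other fixed point in `[u, p]`, this is decided by the multiplier at `p`.
lemma lt_apply_right_iff (hf : IsDecreasingBranch f u v p) (hfu : f u = v)
    (hne : deriv f p ≠ -1) : u < f v ↔ -1 < deriv f p := by
  have hup := hf.mem_Ioo.1
  have hsub : Icc u p ⊆ Icc u v := Icc_subset_Icc_right hf.mem_Ioo.2.le
  have hmaps : MapsTo f (Icc u p) (Icc u v) := fun x hx ↦ by
    have hle := hf.strictAntiOn.antitoneOn (hsub hx) hf.mem_Icc hx.2
    have hge := hf.strictAntiOn.antitoneOn hf.left_mem (hsub hx) hx.1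
    rw [hf.apply_fixed] at hle
    exact ⟨hup.le.trans hle, hge.trans hfu.le⟩
  have hcont : ContinuousOn (fun x ↦ f (f x)) (Icc u p) :=
    hf.continuousOn.comp (hf.continuousOn.mono hsub) hmaps
  have hderiv := hf.hasDerivAt_comp_self
  have hderiv_ne : deriv (fun x ↦ f (f x)) p ≠ 1 := by
    rw [hderiv.deriv]
    exact sq_ne_one_iff.2 ⟨by linarith [hf.deriv_neg p hf.mem_Ioo], hne⟩
  have hiff := dslope_lt_one_iff_of_unique_fixedPoint isPreconnected_Icc hcont
    hderiv.differentiableAt hderiv_ne (by simp only [hf.apply_fixed])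
    (fun y hy ↦ hf.eq_of_two_periodic y (hsub hy) (hmaps hy)) (right_mem_Icc.2 hup.le)
    (left_mem_Icc.2 hup.le)
  rw [dslope_of_ne _ hup.ne, slope_def_field, hderiv.deriv,
    hf.deriv_sq_lt_one_iff, div_lt_one_of_neg (sub_neg.2 hup), hfu, hf.apply_fixed,
    hf.apply_fixed, sub_lt_sub_iff_right] at hiff
  exact hiff

lemma mapsTo_Icc (hf : IsDecreasingBranch f u v p) (hfu : f u = v) (hfv : u ≤ f v) :
    MapsTo f (Icc u v) (Icc u v) := fun _ hx ↦
  ⟨hfv.trans (hf.strictAntiOn.antitoneOn hx hf.right_mem hx.2),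
    (hf.strictAntiOn.antitoneOn hf.left_mem hx hx.1).trans hfu.le⟩

lemma surjOn_Icc (hf : IsDecreasingBranch f u v p) (hfu : f u = v) (hfv : f v ≤ u) :
    SurjOn f (Icc u v) (Icc u v) :=
  (Icc_subset_Icc hfv hfu.ge).trans (intermediate_value_Icc' hf.lt.le hf.continuousOn)

lemma mapsTo_Ioo (hf : IsDecreasingBranch f u v p) (hmaps : MapsTo f (Icc u v) (Icc u v)) :
    MapsTo f (Ioo u v) (Ioo u v) := fun _ hx ↦
  have hxI := Ioo_subset_Icc_self hx
  ⟨(hmaps hf.right_mem).1.trans_lt (hf.strictAntiOn hxI hf.right_mem hx.2),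
    (hf.strictAntiOn hf.left_mem hxI hx.1).trans_le (hmaps hf.left_mem).2⟩

lemma strictMonoOn_comp_self (hf : IsDecreasingBranch f u v p)
    (hmaps : MapsTo f (Icc u v) (Icc u v)) : StrictMonoOn (fun x ↦ f (f x)) (Icc u v) :=
  hf.strictAntiOn.comp hf.strictAntiOn hmaps

lemma lt_comp_self_left (hf : IsDecreasingBranch f u v p) (hmaps : MapsTo f (Icc u v) (Icc u v)) :
    u < f (f u) := by
  refine (hmaps (hmaps hf.left_mem)).1.lt_of_ne fun h ↦ hf.mem_Ioo.1.ne ?_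
  exact hf.eq_of_two_periodic u hf.left_mem (hmaps hf.left_mem) h.symm

lemma comp_self_right_lt (hf : IsDecreasingBranch f u v p)
    (hmaps : MapsTo f (Icc u v) (Icc u v)) : f (f v) < v := by
  refine (hmaps (hmaps hf.right_mem)).2.lt_of_ne fun h ↦ hf.mem_Ioo.2.ne' ?_
  exact hf.eq_of_two_periodic v hf.right_mem (hmaps hf.right_mem) h

lemma mapsTo_comp_self_Icc (hf : IsDecreasingBranch f u v p)
    (hmaps : MapsTo f (Icc u v) (Icc u v)) :
    MapsTo (fun x ↦ f (f x)) (Icc u v) (Icc (f (f u)) (f (f v))) :=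
  (hf.strictMonoOn_comp_self hmaps).monotoneOn.mapsTo_Icc

lemma Icc_comp_self_subset_Ioo (hf : IsDecreasingBranch f u v p)
    (hmaps : MapsTo f (Icc u v) (Icc u v)) : Icc (f (f u)) (f (f v)) ⊆ Ioo u v :=
  Icc_subset_Ioo (hf.lt_comp_self_left hmaps) (hf.comp_self_right_lt hmaps)

lemma mapsTo_Icc_comp_self (hf : IsDecreasingBranch f u v p)
    (hmaps : MapsTo f (Icc u v) (Icc u v)) :
    MapsTo f (Icc (f (f u)) (f (f v))) (Icc (f (f u)) (f (f v))) := by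
  intro y hy
  have hsub := (hf.Icc_comp_self_subset_Ioo hmaps).trans Ioo_subset_Icc_self
  have hmono := (hf.strictMonoOn_comp_self hmaps).monotoneOn
  have hfu := hmaps hf.left_mem
  have hfv := hmaps hf.right_mem
  have hanti := hf.strictAntiOn.antitoneOn
  exact ⟨(hmono hf.left_mem hfv hfv.1).trans (hanti (hsub hy) (hmaps hfv) hy.2),
    (hanti (hmaps hfu) (hsub hy) hy.1).trans (hmono hfu hf.right_mem hfu.2)⟩

lemma exists_summable_dist_iterate_le (hf : IsDecreasingBranch f u v p)
    (hmaps : MapsTo f (Icc u v) (Icc u v)) (hderiv : -1 < deriv f p) :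
    ∃ r : ℕ → ℝ, Summable r ∧ ∀ n, ∀ x ∈ Icc u v, dist (f^[n] x) p ≤ r n := by
  have hd := hf.hasDerivAt_comp_self
  obtain ⟨θ, hθ0, hθ1, hcontr⟩ := exists_dist_le_mul_dist_of_unique_fixedPoint
    isPreconnected_Icc isCompact_Icc (hf.continuousOn.comp hf.continuousOn hmaps)
    (hf.strictMonoOn_comp_self hmaps).monotoneOn hd.differentiableAt
    (hd.deriv.symm ▸ sq_nonneg _) (hd.deriv.symm ▸ hf.deriv_sq_lt_one_iff.2 hderiv)
    (by simp [hf.apply_fixed]) (fun y hy ↦ hf.eq_of_two_periodic y hy (hmaps hy)) hf.mem_Icc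
  exact ⟨fun n ↦ (v - u) * θ ^ (n / 2), (summable_pow_div_two hθ0 hθ1).mul_left _,
    dist_iterate_le_of_dist_comp_self_le hmaps hθ0 hcontr
      fun x hx ↦ Real.dist_le_of_mem_Icc hx hf.mem_Icc⟩

lemma exists_eq_add_comp (hf : IsDecreasingBranch f u v p)
    (hmaps : MapsTo f (Icc u v) (Icc u v)) (hderiv : -1 < deriv f p) {G : ℝ → ℝ}
    (hG : ContinuousOn G (Ioo u v)) (hGd : DifferentiableAt ℝ G p) (hGp : G p = 0) :
    ∃ S : ℝ → ℝ, ContinuousOn S (Ioo u v) ∧ ∀ x ∈ Ioo u v, S x = G x + S (f x) := by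
  obtain ⟨r, hr, hdist⟩ := hf.exists_summable_dist_iterate_le hmaps hderiv
  have hKU := hf.Icc_comp_self_subset_Ioo hmaps
  obtain ⟨C, hC0, hC⟩ := exists_norm_sub_le_mul_of_isCompact isCompact_Icc (hG.mono hKU) hGd
  have hbound : ∀ n, ∀ x ∈ Icc (f (f u)) (f (f v)), ‖G (f^[n] x)‖ ≤ C * r n := by
    intro n x hx
    have hGn := hC _ ((hf.mapsTo_Icc_comp_self hmaps).iterate n hx)
    rw [hGp, sub_zero, ← dist_eq_norm] at hGn
    exact hGn.trans (by gcongr; exact hdist n x (Ioo_subset_Icc_self (hKU hx)))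
  have hUK : MapsTo f^[2] (Ioo u v) (Icc (f (f u)) (f (f v))) :=
    (hf.mapsTo_comp_self_Icc hmaps).mono_left Ioo_subset_Icc_self
  refine ⟨orbitSum f G, ?_, fun x hx ↦ ?_⟩
  · exact continuousOn_orbitSum (hr.mul_left C) hbound hKU hUK (hf.mapsTo_Ioo hmaps)
      (hf.continuousOn.mono Ioo_subset_Icc_self) hG
  · exact orbitSum_eq_add_orbitSum (summable_comp_iterate (hr.mul_left C) hbound hUK hx)

lemma exists_linearizing_density (hf : IsDecreasingBranch f u v p)
    (hmaps : MapsTo f (Icc u v) (Icc u v)) (hderiv : -1 < deriv f p) :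
    ∃ ψ : ℝ → ℝ, ContinuousOn ψ (Ioo u v) ∧ (∀ x, 0 < ψ x) ∧
      ∀ x ∈ Ioo u v, ψ (f x) * deriv f x = deriv f p * ψ x := by
  have hp := hf.deriv_neg p hf.mem_Ioo
  have hquot : ∀ x ∈ Ioo u v, 0 < deriv f x / deriv f p := fun x hx ↦
    div_pos_of_neg_of_neg (hf.deriv_neg x hx) hp
  obtain ⟨S, hS, hSeq⟩ := hf.exists_eq_add_comp hmaps hderiv
    (G := fun x ↦ Real.log (deriv f x / deriv f p))
    ((hf.continuousOn_deriv.div_const _).log fun x hx ↦ (hquot x hx).ne')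
    ((hf.differentiableAt_deriv.div_const _).log (hquot p hf.mem_Ioo).ne')
    (by simp [hp.ne])
  refine ⟨fun x ↦ Real.exp (S x), hS.rexp, fun x ↦ Real.exp_pos _, fun x hx ↦ ?_⟩
  simp only [hSeq x hx, Real.exp_add, Real.exp_log (hquot x hx)]
  field_simp [hp.ne]

lemma exists_linearization_of_mapsTo (hf : IsDecreasingBranch f u v p)
    (hmaps : MapsTo f (Icc u v) (Icc u v)) (hderiv : -1 < deriv f p) :
    ∃ φ, IsLinearization φ f u v (deriv f p) := by
  obtain ⟨ψ, hψ, hψpos, hψeq⟩ := hf.exists_linearizing_density hmaps hderiv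
  set m := deriv f p
  have hm : m ≠ 0 := (hf.deriv_neg p hf.mem_Ioo).ne
  set Φ : ℝ → ℝ := fun x ↦ ∫ t in p..x, ψ t
  have hΦ : ∀ x ∈ Ioo u v, HasDerivAt Φ (ψ x) x := fun x hx ↦
    hasDerivAt_integral_of_continuousOn_Ioo hψ hf.mem_Ioo hx
  have hΦeq : ∀ x ∈ Ioo u v, Φ (f x) = m * Φ x :=
    integral_comp_eq_mul_integral hf.mem_Ioo hf.apply_fixed (hf.mapsTo_Ioo hmaps)
      (fun _ ↦ hf.hasDerivAt) hf.continuousOn_deriv hψ hψeq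
  have hcomp : MapsTo (fun x ↦ f (f x)) (Icc u v) (Ioo u v) :=
    (hf.mapsTo_comp_self_Icc hmaps).mono_right (hf.Icc_comp_self_subset_Ioo hmaps)
  -- `Φ` itself need not extend continuously to `u` and `v` as an integral; pulling it back by
  -- `f ∘ f`, which maps `[u, v]` into `(u, v)`, does not change it on `(u, v)`.
  set φ : ℝ → ℝ := fun x ↦ (m ^ 2)⁻¹ * Φ (f (f x))
  have hφΦ : EqOn φ Φ (Ioo u v) := fun x hx ↦ by
    simp only [φ, hΦeq _ (hf.mapsTo_Ioo hmaps hx), hΦeq x hx]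
    field_simp
  have hφ : ∀ x ∈ Ioo u v, HasDerivAt φ (ψ x) x := fun x hx ↦
    (hΦ x hx).congr_of_eventuallyEq (hφΦ.eventuallyEq_of_mem (isOpen_Ioo.mem_nhds hx))
  refine ⟨φ, .of_mapsTo hmaps ?_ (contDiffOn_one_of_hasDerivAt isOpen_Ioo hφ hψ)
    (fun x hx ↦ (hφ x hx).deriv.symm ▸ hψpos x) fun x hx ↦ ?_⟩
  · have hΦcont : ContinuousOn Φ (Ioo u v) := fun x hx ↦ (hΦ x hx).continuousAt.continuousWithinAt
    exact (hΦcont.comp (hf.continuousOn.comp hf.continuousOn hmaps) hcomp).const_mul _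
  · simp only [φ, hΦeq _ (hcomp hx)]
    ring

lemma apply_eq_iff_invFunOn_eq (hf : IsDecreasingBranch f u v p)
    (hsurj : SurjOn f (Icc u v) (Icc u v)) :
    ∀ x ∈ Icc u v, ∀ y ∈ Icc u v, f x = y ↔ Function.invFunOn f (Icc u v) y = x := by
  intro x hx y hy
  constructor
  · rintro rfl
    exact hf.strictAntiOn.injOn.leftInvOn_invFunOn hx
  · rintro rfl
    exact Function.invFunOn_eq (hsurj hy)

lemma invFunOn_mapsTo_Ioo (hf : IsDecreasingBranch f u v p)
    (hsurj : SurjOn f (Icc u v) (Icc u v)) :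
    MapsTo (Function.invFunOn f (Icc u v)) (Ioo u v) (Ioo u v) := by
  intro y hy
  have hmem := hsurj.mapsTo_invFunOn (Ioo_subset_Icc_self hy)
  have hinv := hsurj.rightInvOn_invFunOn (Ioo_subset_Icc_self hy)
  obtain ⟨x, hx, hxu⟩ := hsurj hf.left_mem
  obtain ⟨z, hz, hzv⟩ := hsurj hf.right_mem
  have hfu : v ≤ f u := hzv ▸ hf.strictAntiOn.antitoneOn hf.left_mem hz hz.1
  have hfv : f v ≤ u := hxu ▸ hf.strictAntiOn.antitoneOn hx hf.right_mem hx.2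
  refine ⟨hmem.1.lt_of_ne fun h ↦ ?_, hmem.2.lt_of_ne fun h ↦ ?_⟩
  · rw [← h] at hinv
    exact (hy.2.trans_le hfu).ne' hinv
  · rw [h] at hinv
    exact (hfv.trans_lt hy.1).ne hinv

lemma hasDerivAt_invFunOn (hf : IsDecreasingBranch f u v p)
    (hsurj : SurjOn f (Icc u v) (Icc u v)) {y : ℝ} (hy : y ∈ Ioo u v) :
    HasDerivAt (Function.invFunOn f (Icc u v))
      (deriv f (Function.invFunOn f (Icc u v) y))⁻¹ y := by
  have hx := hf.invFunOn_mapsTo_Ioo hsurj hy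
  have hleft : ∀ᶠ z in 𝓝 (Function.invFunOn f (Icc u v) y),
      Function.invFunOn f (Icc u v) (f z) = z := by
    filter_upwards [Icc_mem_nhds hx.1 hx.2] with z hz
      using hf.strictAntiOn.injOn.leftInvOn_invFunOn hz
  have hinv := ((hf.contDiffAt hx).hasStrictDerivAt one_ne_zero).to_local_left_inverse
    (hf.deriv_neg _ hx).ne hleft
  rw [hsurj.rightInvOn_invFunOn (Ioo_subset_Icc_self hy)] at hinv
  exact hinv.hasDerivAt

lemma invFunOn_fixed (hf : IsDecreasingBranch f u v p) : Function.invFunOn f (Icc u v) p = p := by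
  simpa only [hf.apply_fixed] using hf.strictAntiOn.injOn.leftInvOn_invFunOn hf.mem_Icc

lemma deriv_invFunOn_fixed (hf : IsDecreasingBranch f u v p)
    (hsurj : SurjOn f (Icc u v) (Icc u v)) :
    deriv (Function.invFunOn f (Icc u v)) p = (deriv f p)⁻¹ := by
  rw [(hf.hasDerivAt_invFunOn hsurj hf.mem_Ioo).deriv, hf.invFunOn_fixed]

lemma invFunOn (hf : IsDecreasingBranch f u v p) (hsurj : SurjOn f (Icc u v) (Icc u v)) :
    IsDecreasingBranch (Function.invFunOn f (Icc u v)) u v p := by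
  have hcont : ContinuousOn (Function.invFunOn f (Icc u v)) (Icc u v) :=
    (continuousOn_invFunOn_of_isCompact isCompact_Icc hf.continuousOn hf.strictAntiOn.injOn).mono
      hsurj
  have hderiv : ∀ y ∈ Ioo u v, HasDerivAt (Function.invFunOn f (Icc u v))
      (deriv f (Function.invFunOn f (Icc u v) y))⁻¹ y := fun _ ↦ hf.hasDerivAt_invFunOn hsurj
  have hmaps := hf.invFunOn_mapsTo_Ioo hsurj
  refine ⟨hf.mem_Ioo, hf.invFunOn_fixed, hcont, ?_, fun y hy ↦ ?_, ?_, fun y hy _ hyy ↦ ?_⟩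
  · exact contDiffOn_one_of_hasDerivAt isOpen_Ioo hderiv <|
      (hf.continuousOn_deriv.comp (hcont.mono Ioo_subset_Icc_self) hmaps).inv₀
        fun y hy ↦ (hf.deriv_neg _ (hmaps hy)).ne
  · rw [(hderiv y hy).deriv]
    exact inv_lt_zero.2 (hf.deriv_neg _ (hmaps hy))
  · have heq : deriv (Function.invFunOn f (Icc u v)) =ᶠ[𝓝 p]
        fun y ↦ (deriv f (Function.invFunOn f (Icc u v) y))⁻¹ := by
      filter_upwards [isOpen_Ioo.mem_nhds hf.mem_Ioo] with y hy using (hderiv y hy).deriv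
    have hp : DifferentiableAt ℝ (deriv f) (Function.invFunOn f (Icc u v) p) :=
      hf.invFunOn_fixed.symm ▸ hf.differentiableAt_deriv
    exact ((hp.comp p (hderiv p hf.mem_Ioo).differentiableAt).fun_inv
      (hf.deriv_neg _ (hmaps hf.mem_Ioo)).ne).congr_of_eventuallyEq heq
  · have hmem := hsurj.mapsTo_invFunOn hy
    have hfy := (hf.apply_eq_iff_invFunOn_eq hsurj y hy _ hmem).2 hyy
    refine hf.eq_of_two_periodic y hy (hfy ▸ hmem) ?_
    rw [hfy, hsurj.rightInvOn_invFunOn hy]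

lemma exists_linearization_of_surjOn (hf : IsDecreasingBranch f u v p)
    (hsurj : SurjOn f (Icc u v) (Icc u v)) (hderiv : deriv f p < -1) :
    ∃ φ, IsLinearization φ f u v (deriv f p) := by
  have hm := hf.deriv_invFunOn_fixed hsurj
  have hneg := hf.deriv_neg p hf.mem_Ioo
  have hgt : -1 < deriv (Function.invFunOn f (Icc u v)) p := by
    rw [hm, ← inv_neg_one]
    exact (inv_lt_inv_of_neg (by norm_num) hneg).2 hderiv
  obtain ⟨φ, hφ⟩ :=
    (hf.invFunOn hsurj).exists_linearization_of_mapsTo hsurj.mapsTo_invFunOn hgt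
  rw [hm] at hφ
  exact ⟨φ, hφ.of_inverse hneg.ne (hf.apply_eq_iff_invFunOn_eq hsurj)⟩

lemma exists_linearization (hf : IsDecreasingBranch f u v p) (hfu : f u = v)
    (hne : deriv f p ≠ -1) : ∃ φ, IsLinearization φ f u v (deriv f p) := by
  have hiff := hf.lt_apply_right_iff hfu hne
  obtain hrep | hatt := hne.lt_or_gt
  · exact hf.exists_linearization_of_surjOn
      (hf.surjOn_Icc hfu (not_lt.1 (hiff.not.2 hrep.not_gt))) hrep
  · exact hf.exists_linearization_of_mapsTo (hf.mapsTo_Icc hfu (hiff.2 hatt).le) hatt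

lemma of_contDiffOn_two {a b : ℝ} (hf : ContDiffOn ℝ 2 f (Icc a b))
    (hderiv : ∀ x ∈ Ioo a b, deriv f x < 0) (hp : p ∈ Ioo a b) (hfp : f p = p)
    (hper : ∀ x ∈ Ioo a b, f (f x) = x → x = p) (hu : u ∈ Ioo a b) (hfu : f u = b) :
    IsDecreasingBranch f u b p := by
  have hanti : StrictAntiOn f (Icc a b) :=
    strictAntiOn_of_deriv_neg (convex_Icc a b) hf.continuousOn (by rwa [interior_Icc])
  have hpI := Ioo_subset_Icc_self hp
  have huI := Ioo_subset_Icc_self hu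
  have hup : u < p := (hanti.lt_iff_gt hpI huI).1 (by rw [hfp, hfu]; exact hp.2)
  have hIoo : Ioo u b ⊆ Ioo a b := Ioo_subset_Ioo_left hu.1.le
  have hf2 : ContDiffOn ℝ 2 f (Ioo a b) := hf.mono Ioo_subset_Icc_self
  have hf' : ContDiffOn ℝ 1 (deriv f) (Ioo a b) :=
    hf2.deriv_of_isOpen isOpen_Ioo one_add_one_eq_two.le
  refine ⟨⟨hup, hp.2⟩, hfp, hf.continuousOn.mono (Icc_subset_Icc_left hu.1.le),
    (hf2.mono hIoo).of_le one_le_two, fun x hx ↦ hderiv x (hIoo hx),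
    (hf'.contDiffAt (isOpen_Ioo.mem_nhds hp)).differentiableAt one_ne_zero,
    fun x hx hfx hffx ↦ ?_⟩
  obtain rfl | hxb := hx.2.eq_or_lt
  -- A `2`-periodic endpoint `x = b` would make `f b`, which is interior, `2`-periodic as well.
  · have hfxlt : f x < x :=
      (hanti hpI (right_mem_Icc.2 (hp.1.trans hp.2).le) hp.2).trans (hfp.trans_lt hp.2)
    have hfxp : f x = p := hper (f x) ⟨hu.1.trans_le hfx.1, hfxlt⟩ (congrArg f hffx)
    rw [← hffx, hfxp, hfp]
  · exact hper x ⟨hu.1.trans_le hx.1, hxb⟩ hffx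

end IsDecreasingBranch

end DecreasingBranch

theorem stmt7_general {f g : ℝ → ℝ} {u v c d p q : ℝ} (hf : IsDecreasingBranch f u v p)
    (hg : IsDecreasingBranch g c d q) (hfu : f u = v) (hgc : g c = d)
    (hderiv : deriv g q = deriv f p) (hne : deriv f p ≠ -1) :
    ∃ h, StrictMonoOn h (Ioo u v) ∧ IsDiffeoOn h (Ioo u v) (Ioo c d) ∧
      ConjRelOn h f g (Ioo u v) := by
  obtain ⟨φ, hφ⟩ := hf.exists_linearization hfu hne
  obtain ⟨χ, hχ⟩ := hg.exists_linearization hgc (hderiv ▸ hne)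
  rw [hderiv] at hχ
  exact hφ.exists_conjugacy hχ hf.lt hg.lt hfu hgc
    ((hf.deriv_neg p hf.mem_Ioo).trans one_pos)

/-- Matching points, decreasing case (Lemma 4.5).
`fb` is the unique point of `(a,b)` mapped to `b` by `f` (i.e. `f⁻¹(b)`), and
`gd` is the unique point of `(c,d)` mapped to `d` by `g` (i.e. `g⁻¹(d)`). -/
theorem stmt7 (a b c d lam xs ys fb gd : ℝ) (f g : ℝ → ℝ)
    (hab : a < b) (hcd : c < d)
    (hf : ContDiffOn ℝ 2 f (Set.Icc a b))
    (hfd : ∀ x ∈ Set.Ioo a b, deriv f x < 0)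
    (hbfa : b < f a)
    (hxs : xs ∈ Set.Ioo a b) (hfxs : f xs = xs)
    (hlam : deriv f xs = lam) (hlam1 : lam ≠ -1)
    (hfper2 : ∀ x ∈ Set.Ioo a b, f (f x) = x → x = xs)
    (hg : ContDiffOn ℝ 2 g (Set.Icc c d))
    (hgd : ∀ y ∈ Set.Ioo c d, deriv g y < 0)
    (hdgc : d < g c)
    (hys : ys ∈ Set.Ioo c d) (hgys : g ys = ys)
    (hglam : deriv g ys = lam)
    (hgper2 : ∀ y ∈ Set.Ioo c d, g (g y) = y → y = ys)
    (hfb : fb ∈ Set.Ioo a b) (hffb : f fb = b)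
    (hgd' : gd ∈ Set.Ioo c d) (hggd : g gd = d) :
    ∃ h : ℝ → ℝ, StrictMonoOn h (Set.Ioo fb b) ∧
      IsDiffeoOn h (Set.Ioo fb b) (Set.Ioo gd d) ∧
      ConjRelOn h f g (Set.Ioo fb b) := by
  exact stmt7_general (.of_contDiffOn_two hf hfd hxs hfxs hfper2 hfb hffb)
    (.of_contDiffOn_two hg hgd hys hgys hgper2 hgd' hggd) hffb hggd (hglam.trans hlam.symm)
    (hlam ▸ hlam1)
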